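/- arXiv:1012.5043 — 2 statements merged into one kernel-verified Lean document; each statement's English description precedes it below -/
import Mathlib

section
/- For every n = 2^k that is a power of 2 and every η ∈ [0, 1/2], every deterministic classical strategy for the Khot–Vishnoi game KV(n, η) has winning probability Pr_{u,z}[A(u) ⊕ B(u⊕z) = z] at most 1/n^{η/(1−η)}. -/
open scoped Classical
open Finset

/-- Inner product mod 2 on `{0,1}^k`, as a Boolean. -/
def bdot {k : ℕ} (a b : Fin k → Bool) : Bool :=
  decide ((Finset.univ.filter fun t => a t && b t).card % 2 = 1)

/-- The Hadamard codeword associated with `s ∈ {0,1}^k`: the string in `{0,1}^n`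
(`n = 2^k`, indices identified with `{0,1}^k`) whose `j`-th bit is `s·j mod 2`. -/
def had {k : ℕ} (s : Fin k → Bool) : (Fin k → Bool) → Bool := fun j => bdot s j

/-- Bitwise XOR of two strings in `{0,1}^n`, `n = 2^k`. -/
def sxor {k : ℕ} (w w' : (Fin k → Bool) → Bool) : (Fin k → Bool) → Bool :=
  fun j => xor (w j) (w' j)

/-- Hamming weight of a string in `{0,1}^n`, `n = 2^k`. -/
def wt {k : ℕ} (z : (Fin k → Bool) → Bool) : ℕ :=
  (Finset.univ.filter fun j => z j = true).card

/-!
If `(u, z)` is won, write `A u = u + h` with `h ∈ H`. As the strategies are constant on cosets,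
`u + h` is a fixed point of `A` and `u + h + z` is a fixed point of `B`. Since `u + h` is again
uniform, the winning probability is at most `|H|` times the probability that `u` is fixed by `A` and
`u + z` is fixed by `B`. A coset contains at most one fixed point of each strategy, so both sets of
fixed points have density at most `1 / |H|`. By two-function hypercontractivity of the noise `z`
with exponent `p = 2 (1 - η)`, which tensorizes from Bonami's two-point inequality, the winning
probability is at most `|H| * |H| ^ (-2 / p) = |H| ^ (-η / (1 - η))`.
-/

open scoped BigOperators
open Function (fixedPoints)

/-! ### The two-point inequality -/

lemma two_mul_mul_le_rpow_sub_rpow {q b : ℝ} (hq0 : 0 ≤ q) (hq1 : q ≤ 1) (hb0 : 0 ≤ b)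
    (hb1 : b ≤ 1) : 2 * q * b ≤ (1 + b) ^ q - (1 - b) ^ q := by
  let φ : ℝ → ℝ := fun x ↦ (1 + x) ^ q - (1 - x) ^ q - 2 * q * x
  have hφ' : ∀ x ∈ Set.Ioo (0 : ℝ) 1,
      HasDerivAt φ (q * ((1 + x) ^ (q - 1) + (1 - x) ^ (q - 1) - 2)) x := by
    intro x hx
    have hplus : 1 + x ≠ 0 := by linarith [hx.1]
    have hminus : 1 - x ≠ 0 := by linarith [hx.2]
    exact (((((hasDerivAt_id' x).const_add 1).rpow_const (Or.inl hplus)).sub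
      (((hasDerivAt_id' x).const_sub 1).rpow_const (Or.inl hminus))).sub
      ((hasDerivAt_id' x).const_mul (2 * q))).congr_deriv (by ring)
  have hmono : MonotoneOn φ (Set.Icc 0 1) := by
    refine monotoneOn_of_hasDerivWithinAt_nonneg (convex_Icc 0 1)
      (by fun_prop (disch := assumption))
      (fun x hx ↦ (hφ' x (interior_Icc (α := ℝ) ▸ hx)).hasDerivWithinAt) fun x hx ↦ ?_
    rw [interior_Icc] at hx
    have hplus : 0 < 1 + x := by linarith [hx.1]
    have hminus : 0 < 1 - x := by linarith [hx.2]
    have hprod : 1 ≤ (1 + x) ^ (q - 1) * (1 - x) ^ (q - 1) := by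
      rw [← Real.mul_rpow hplus.le hminus.le]
      exact Real.one_le_rpow_of_pos_of_le_one_of_nonpos (by positivity)
        (by nlinarith [sq_nonneg x]) (by linarith)
    have hpluspow := Real.rpow_pos_of_pos hplus (q - 1)
    have hminuspow := Real.rpow_pos_of_pos hminus (q - 1)
    -- AM-GM, as the product is at least `1`
    have hsum : 2 ≤ (1 + x) ^ (q - 1) + (1 - x) ^ (q - 1) := by
      nlinarith [sq_nonneg ((1 + x) ^ (q - 1) - (1 - x) ^ (q - 1))]
    exact mul_nonneg hq0 (by linarith)
  have := hmono (Set.left_mem_Icc.2 zero_le_one) ⟨hb0, hb1⟩ hb0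
  simp only [φ, add_zero, sub_zero, sub_self, mul_zero] at this
  linarith

lemma one_add_mul_sq_le_rpow_add_rpow {p b : ℝ} (hp1 : 1 ≤ p) (hp2 : p ≤ 2) (hb0 : 0 ≤ b)
    (hb1 : b ≤ 1) : 1 + p / 2 * ((p - 1) * b ^ 2) ≤ ((1 + b) ^ p + (1 - b) ^ p) / 2 := by
  let φ : ℝ → ℝ := fun x ↦ (1 + x) ^ p + (1 - x) ^ p - p * (p - 1) * x ^ 2
  have hp0 : 0 ≤ p := by linarith
  have hφ' : ∀ x ∈ Set.Ioo (0 : ℝ) 1,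
      HasDerivAt φ (p * ((1 + x) ^ (p - 1) - (1 - x) ^ (p - 1) - 2 * (p - 1) * x)) x := by
    intro x _
    exact (((((hasDerivAt_id' x).const_add 1).rpow_const (Or.inr hp1)).add
      (((hasDerivAt_id' x).const_sub 1).rpow_const (Or.inr hp1))).sub
      ((hasDerivAt_pow 2 x).const_mul (p * (p - 1)))).congr_deriv (by push_cast; ring)
  have hmono : MonotoneOn φ (Set.Icc 0 1) := by
    refine monotoneOn_of_hasDerivWithinAt_nonneg (convex_Icc 0 1)
      (by fun_prop (disch := assumption))
      (fun x hx ↦ (hφ' x (interior_Icc (α := ℝ) ▸ hx)).hasDerivWithinAt) fun x hx ↦ ?_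
    rw [interior_Icc] at hx
    exact mul_nonneg hp0 <| sub_nonneg.2 <| two_mul_mul_le_rpow_sub_rpow (by linarith)
      (by linarith) hx.1.le hx.2.le
  have := hmono (Set.left_mem_Icc.2 zero_le_one) ⟨hb0, hb1⟩ hb0
  simp only [φ, add_zero, sub_zero, Real.one_rpow, ne_eq, OfNat.ofNat_ne_zero, not_false_eq_true,
    zero_pow, mul_zero] at this
  linarith

lemma sq_add_mul_sq_rpow_le {p a b : ℝ} (hp1 : 1 ≤ p) (hp2 : p ≤ 2) (hab : |b| ≤ a) :
    (a ^ 2 + (p - 1) * b ^ 2) ^ (p / 2) ≤ ((a + b) ^ p + (a - b) ^ p) / 2 := by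
  wlog hb : 0 ≤ b generalizing b
  · simpa [add_comm, sub_eq_add_neg] using this (b := -b) (by simpa using hab) (by linarith)
  rw [abs_of_nonneg hb] at hab
  rcases (hb.trans hab).eq_or_lt with rfl | ha
  · obtain rfl : b = 0 := le_antisymm hab hb
    simp [Real.zero_rpow (show p ≠ 0 by linarith), Real.zero_rpow (show p / 2 ≠ 0 by linarith)]
  obtain ⟨t, rfl⟩ : ∃ t, b = a * t := ⟨b / a, by field_simp⟩
  have ht0 : 0 ≤ t := nonneg_of_mul_nonneg_right hb ha
  have ht1 : t ≤ 1 := by nlinarith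
  have hs : 0 ≤ (p - 1) * t ^ 2 := mul_nonneg (by linarith) (sq_nonneg t)
  calc (a ^ 2 + (p - 1) * (a * t) ^ 2) ^ (p / 2)
      = (a ^ 2 * (1 + (p - 1) * t ^ 2)) ^ (p / 2) := by ring_nf
    _ = a ^ p * (1 + (p - 1) * t ^ 2) ^ (p / 2) := by
      rw [Real.mul_rpow (by positivity) (by positivity), ← Real.rpow_two, ← Real.rpow_mul ha.le,
        mul_div_cancel₀ p two_ne_zero]
    _ ≤ a ^ p * (((1 + t) ^ p + (1 - t) ^ p) / 2) := by
      gcongr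
      exact (rpow_one_add_le_one_add_mul_self (by linarith) (by linarith) (by linarith)).trans
        (one_add_mul_sq_le_rpow_add_rpow hp1 hp2 ht0 ht1)
    _ = ((a + a * t) ^ p + (a - a * t) ^ p) / 2 := by
      rw [← mul_one_add, ← mul_one_sub, Real.mul_rpow ha.le (by linarith),
        Real.mul_rpow ha.le (by linarith)]
      ring

/-! ### Power means -/

section PowerMean

variable {X Y : Type*} [Fintype X] [Fintype Y] {p : ℝ}

/-- The power mean of exponent `p`, that is, the `L^p` norm with respect to the uniform probability
measure; it is only meant for nonnegative functions, so no absolute value is taken. -/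
noncomputable def powerMean (p : ℝ) (f : X → ℝ) : ℝ := (𝔼 x, f x ^ p) ^ (1 / p)

lemma expect_rpow_nonneg {f : X → ℝ} (hf : ∀ x, 0 ≤ f x) : 0 ≤ 𝔼 x, f x ^ p :=
  expect_nonneg fun x _ ↦ Real.rpow_nonneg (hf x) p

lemma powerMean_nonneg {f : X → ℝ} (hf : ∀ x, 0 ≤ f x) : 0 ≤ powerMean p f :=
  Real.rpow_nonneg (expect_rpow_nonneg hf) _

lemma powerMean_rpow (hp : p ≠ 0) {f : X → ℝ} (hf : ∀ x, 0 ≤ f x) :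
    powerMean p f ^ p = 𝔼 x, f x ^ p := by
  rw [powerMean, one_div, Real.rpow_inv_rpow (expect_rpow_nonneg hf) hp]

lemma powerMean_comp_equiv (e : Y ≃ X) (f : X → ℝ) : powerMean p (f ∘ e) = powerMean p f := by
  rw [powerMean, powerMean,
    Fintype.expect_equiv e (fun y ↦ (f ∘ e) y ^ p) (fun x ↦ f x ^ p) fun _ ↦ rfl]

lemma powerMean_of_unique [Unique X] (hp : p ≠ 0) {f : X → ℝ} (hf : 0 ≤ f default) :
    powerMean p f = f default := by
  rw [powerMean, univ_unique, expect_singleton, one_div, Real.rpow_rpow_inv hf hp]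

lemma powerMean_prod (hp : p ≠ 0) {f : X × Y → ℝ} (hf : ∀ w, 0 ≤ f w) :
    powerMean p (fun x ↦ powerMean p fun y ↦ f (x, y)) = powerMean p f := by
  rw [powerMean, powerMean, ← univ_product_univ, expect_product]
  simp only [powerMean_rpow hp fun y ↦ hf (_, y)]

lemma powerMean_indicator_one (hp : p ≠ 0) (s : Set X) :
    powerMean p (s.indicator 1) = (𝔼 x, s.indicator (1 : X → ℝ) x) ^ (1 / p) := by
  have hpow (x : X) : s.indicator (1 : X → ℝ) x ^ p = s.indicator 1 x := by
    by_cases hx : x ∈ s <;> simp [hx, Real.zero_rpow hp]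
  simp only [powerMean, hpow]

lemma sq_add_mul_sq_le_powerMean_sq (hp1 : 1 ≤ p) (hp2 : p ≤ 2) {f : Bool → ℝ}
    (hf : ∀ x, 0 ≤ f x) :
    ((f true + f false) / 2) ^ 2 + (p - 1) * ((f true - f false) / 2) ^ 2
      ≤ powerMean p f ^ 2 := by
  have hbase : 0 ≤ ((f true + f false) / 2) ^ 2 + (p - 1) * ((f true - f false) / 2) ^ 2 :=
    add_nonneg (sq_nonneg _) (mul_nonneg (by linarith) (sq_nonneg _))
  have habs : |(f true - f false) / 2| ≤ (f true + f false) / 2 :=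
    abs_le.2 ⟨by linarith [hf true], by linarith [hf false]⟩
  have hp0 : 0 < p := by linarith
  refine (Real.rpow_le_rpow_iff hbase (sq_nonneg _) (half_pos hp0)).1 ?_
  calc _ ≤ _ := sq_add_mul_sq_rpow_le hp1 hp2 habs
    _ = powerMean p f ^ p := by
      rw [powerMean_rpow hp0.ne' hf, Fintype.expect_eq_sum_div_card, Fintype.sum_bool,
        Fintype.card_bool]
      ring_nf
    _ = (powerMean p f ^ 2) ^ (p / 2) := by
      rw [← Real.rpow_two, ← Real.rpow_mul (powerMean_nonneg hf), mul_div_cancel₀ p two_ne_zero]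

end PowerMean

/-! ### Two-function hypercontractivity -/

/-- Two-function hypercontractivity with exponent `p` of a kernel `K` on a finite set: if `x` is
uniform and `K x y` is the probability of `y` given `x`, it reads
`E[f(x) g(y)] ≤ ‖f‖_p ‖g‖_p` for all nonnegative `f` and `g`. -/
def IsHypercontractive {X : Type*} [Fintype X] (p : ℝ) (K : X → X → ℝ) : Prop :=
  ∀ f g : X → ℝ, (∀ x, 0 ≤ f x) → (∀ x, 0 ≤ g x) →
    𝔼 x, ∑ y, K x y * (f x * g y) ≤ powerMean p f * powerMean p g

namespace IsHypercontractive

variable {X Y : Type*} [Fintype X] [Fintype Y] {p : ℝ} {K : X → X → ℝ} {L : Y → Y → ℝ}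

lemma comp_equiv (hK : IsHypercontractive p K) (e : Y ≃ X) :
    IsHypercontractive p fun y y' ↦ K (e y) (e y') := by
  intro f g hf hg
  have h := hK (f ∘ e.symm) (g ∘ e.symm) (fun _ ↦ hf _) (fun _ ↦ hg _)
  rw [powerMean_comp_equiv, powerMean_comp_equiv] at h
  refine (Fintype.expect_equiv e _ _ fun y ↦ ?_).trans_le h
  exact Fintype.sum_equiv e _ _ fun y' ↦ by simp

lemma prod (hK : IsHypercontractive p K) (hL : IsHypercontractive p L)
    (hK0 : ∀ x x', 0 ≤ K x x') (hp : p ≠ 0) :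
    IsHypercontractive p fun w w' : X × Y ↦ K w.1 w'.1 * L w.2 w'.2 := by
  intro f g hf hg
  calc 𝔼 w, ∑ w', K w.1 w'.1 * L w.2 w'.2 * (f w * g w')
      = 𝔼 x, ∑ x', K x x' * 𝔼 y, ∑ y', L y y' * (f (x, y) * g (x', y')) := by
        rw [← univ_product_univ, expect_product]
        refine expect_congr rfl fun x _ ↦ ?_
        simp only [mul_expect, ← expect_sum_comm, sum_product, mul_sum, mul_assoc]
    _ ≤ 𝔼 x, ∑ x', K x x' *
          (powerMean p (fun y ↦ f (x, y)) * powerMean p fun y ↦ g (x', y)) := by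
        gcongr with x _ x' _
        · exact hK0 x x'
        · exact hL _ _ (fun _ ↦ hf _) (fun _ ↦ hg _)
    _ ≤ _ := hK _ _ (fun _ ↦ powerMean_nonneg fun _ ↦ hf _) fun _ ↦ powerMean_nonneg fun _ ↦ hg _
    _ = powerMean p f * powerMean p g := by rw [powerMean_prod hp hf, powerMean_prod hp hg]

lemma of_unique [Unique X] (hp : p ≠ 0) : IsHypercontractive p fun _ _ : X ↦ 1 := by
  intro f g hf hg
  simp [powerMean_of_unique hp (hf _), powerMean_of_unique hp (hg _)]

lemma pi_fin (hK : IsHypercontractive p K) (hK0 : ∀ x x', 0 ≤ K x x') (hp : p ≠ 0) (n : ℕ) :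
    IsHypercontractive p fun x y : Fin n → X ↦ ∏ i, K (x i) (y i) := by
  induction n with
  | zero => simpa using of_unique hp
  | succ n ih =>
    simpa [Fin.prod_univ_succ, Fin.consEquiv, Fin.tail] using
      (hK.prod ih hK0 hp).comp_equiv (Fin.consEquiv fun _ : Fin (n + 1) ↦ X).symm

lemma pi {ι : Type*} [Fintype ι] [DecidableEq ι] (hK : IsHypercontractive p K)
    (hK0 : ∀ x x', 0 ≤ K x x') (hp : p ≠ 0) :
    IsHypercontractive p fun x y : ι → X ↦ ∏ i, K (x i) (y i) := by
  let e := Fintype.equivFin ι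
  have h := (hK.pi_fin hK0 hp (Fintype.card ι)).comp_equiv (e.arrowCongr (Equiv.refl X))
  convert h using 3 with x y
  exact Fintype.prod_equiv e _ _ fun i ↦ by simp

end IsHypercontractive

/-- The transition kernel of the binary symmetric channel: a bit is flipped with probability
`η`. -/
noncomputable def bitFlipKernel (η : ℝ) (x y : Bool) : ℝ := if x = y then 1 - η else η

lemma bitFlipKernel_nonneg {η : ℝ} (hη0 : 0 ≤ η) (hη1 : η ≤ 1) (x y : Bool) :
    0 ≤ bitFlipKernel η x y := by
  unfold bitFlipKernel
  split_ifs <;> linarith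

lemma isHypercontractive_bitFlipKernel {η : ℝ} (hη0 : 0 ≤ η) (hη1 : η ≤ 1 / 2) :
    IsHypercontractive (2 * (1 - η)) (bitFlipKernel η) := by
  intro f g hf hg
  set a := (f true + f false) / 2 with ha
  set b := (f true - f false) / 2 with hb
  set a' := (g true + g false) / 2 with ha'
  set b' := (g true - g false) / 2 with hb'
  set ρ := 2 * (1 - η) - 1 with hρ
  have hρ0 : 0 ≤ ρ := by linarith
  have hf2 : a ^ 2 + ρ * b ^ 2 ≤ _ :=
    sq_add_mul_sq_le_powerMean_sq (by linarith) (by linarith) hf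
  have hg2 : a' ^ 2 + ρ * b' ^ 2 ≤ _ :=
    sq_add_mul_sq_le_powerMean_sq (by linarith) (by linarith) hg
  calc 𝔼 x, ∑ y, bitFlipKernel η x y * (f x * g y)
      = a * a' + ρ * (b * b') := by
        rw [Fintype.expect_eq_sum_div_card]
        simp only [bitFlipKernel, Fintype.sum_bool, Fintype.card_bool, reduceIte, reduceCtorEq,
          Nat.cast_ofNat]
        rw [ha, hb, ha', hb', hρ]
        ring
    _ ≤ powerMean (2 * (1 - η)) f * powerMean (2 * (1 - η)) g := by
      refine le_of_sq_le_sq ?_ (mul_nonneg (powerMean_nonneg hf) (powerMean_nonneg hg))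
      calc (a * a' + ρ * (b * b')) ^ 2
          ≤ (a ^ 2 + ρ * b ^ 2) * (a' ^ 2 + ρ * b' ^ 2) := by
            nlinarith [mul_nonneg hρ0 (sq_nonneg (a * b' - b * a'))]
        _ ≤ _ := by
          rw [mul_pow]
          gcongr

/-! ### Coset games -/

section CosetGame

variable {G : Type*} [AddCommGroup G] {H : AddSubgroup G} {A B : G → G}

lemma card_fixedPoints_mul_card_le [Finite G] (hA : ∀ w, ∀ h ∈ H, A (w + h) = A w) :
    Nat.card (fixedPoints A) * Nat.card H ≤ Nat.card G := by
  rw [← Nat.card_prod]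
  refine Nat.card_le_card_of_injective (fun wh ↦ (wh.1 + wh.2 : G)) ?_
  rintro ⟨⟨w, hw⟩, h, hh⟩ ⟨⟨w', hw'⟩, h', hh'⟩ (heq : w + h = w' + h')
  obtain rfl : w = w' :=
    calc w = A (w + h) := by rw [hA w h hh, hw]
      _ = w' := by rw [heq, hA w' h' hh', hw']
  simpa using heq

variable [Fintype G]

lemma powerMean_indicator_fixedPoints_le {p : ℝ} (hp : 0 < p)
    (hA : ∀ w, ∀ h ∈ H, A (w + h) = A w) :
    powerMean p ((fixedPoints A).indicator 1) ≤ (Nat.card H : ℝ)⁻¹ ^ (1 / p) := by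
  have hH : (0 : ℝ) < Nat.card H := mod_cast Nat.card_pos
  have hG : (0 : ℝ) < Fintype.card G := mod_cast Fintype.card_pos
  rw [powerMean_indicator_one hp.ne']
  refine Real.rpow_le_rpow (expect_nonneg fun x _ ↦ Set.indicator_nonneg (by simp) x) ?_
    (by positivity)
  rw [Fintype.expect_eq_sum_div_card, div_le_iff₀ hG, inv_mul_eq_div, le_div_iff₀ hH]
  have hcard : ∑ w, (fixedPoints A).indicator (1 : G → ℝ) w = Nat.card (fixedPoints A) := by
    simp [Set.indicator_apply, Nat.card_eq_fintype_card, Fintype.card_subtype]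
  rw [hcard]
  exact_mod_cast Nat.card_eq_fintype_card (α := G) ▸ card_fixedPoints_mul_card_le hA

variable [DecidableEq G]

lemma win_le_sum_indicator_fixedPoints (hA : ∀ w, ∀ h ∈ H, A (w + h) = A w)
    (hAmem : ∀ w, A w - w ∈ H) (hB : ∀ w, ∀ h ∈ H, B (w + h) = B w) (u z : G) :
    (if B (u + z) - A u = z then (1 : ℝ) else 0) ≤
      ∑ h : H, (fixedPoints A).indicator 1 (u + h) * (fixedPoints B).indicator 1 (u + h + z) := by
  have hnonneg (h : H) : (0 : ℝ) ≤
      (fixedPoints A).indicator 1 (u + h) * (fixedPoints B).indicator 1 (u + h + z) :=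
    mul_nonneg (Set.indicator_nonneg (by simp) _) (Set.indicator_nonneg (by simp) _)
  split_ifs with hwin
  · let h : H := ⟨A u - u, hAmem u⟩
    have hAfix : u + h ∈ fixedPoints A := by
      change A (u + h) = u + h
      rw [hA u h h.2]
      exact (add_sub_cancel u (A u)).symm
    have hBfix : u + h + z ∈ fixedPoints B := by
      change B (u + h + z) = u + h + z
      rw [add_right_comm, hB _ h h.2, sub_eq_iff_eq_add'.1 hwin]
      simp only [h]
      abel
    refine le_trans ?_ (single_le_sum (fun h _ ↦ hnonneg h) (mem_univ h))
    simp [hAfix, hBfix]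
  · exact sum_nonneg fun h _ ↦ hnonneg h

lemma coset_game_win_le {p : ℝ} (hp : 0 < p) {μ : G → ℝ} (hμ0 : ∀ z, 0 ≤ μ z)
    (hμ : IsHypercontractive p fun x y ↦ μ (y - x)) (hA : ∀ w, ∀ h ∈ H, A (w + h) = A w)
    (hAmem : ∀ w, A w - w ∈ H) (hB : ∀ w, ∀ h ∈ H, B (w + h) = B w) :
    𝔼 u, ∑ z, μ z * (if B (u + z) - A u = z then (1 : ℝ) else 0)
      ≤ (Nat.card H : ℝ) ^ (1 - 2 / p) := by
  let f : G → ℝ := (fixedPoints A).indicator 1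
  let g : G → ℝ := (fixedPoints B).indicator 1
  have hf : ∀ w, 0 ≤ f w := Set.indicator_nonneg (by simp)
  have hg : ∀ w, 0 ≤ g w := Set.indicator_nonneg (by simp)
  have hH : (0 : ℝ) < Nat.card H := mod_cast Nat.card_pos
  calc 𝔼 u, ∑ z, μ z * (if B (u + z) - A u = z then (1 : ℝ) else 0)
      ≤ 𝔼 u, ∑ z, μ z * ∑ h : H, f (u + h) * g (u + h + z) := by
        gcongr with u _ z _
        · exact hμ0 z
        · exact win_le_sum_indicator_fixedPoints hA hAmem hB u z
    _ = ∑ h : H, 𝔼 u, ∑ z, μ z * (f (u + h) * g (u + h + z)) := by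
        rw [← expect_sum_comm]
        refine expect_congr rfl fun u _ ↦ ?_
        simp only [mul_sum]
        exact sum_comm
    _ = ∑ _h : H, 𝔼 x, ∑ y, μ (y - x) * (f x * g y) := by
        refine sum_congr rfl fun h _ ↦ Fintype.expect_equiv (Equiv.addRight (h : G)) _ _ fun u ↦ ?_
        exact Fintype.sum_equiv (Equiv.addLeft (u + h)) _ _ fun z ↦ by simp [add_assoc]
    _ = Nat.card H * 𝔼 x, ∑ y, μ (y - x) * (f x * g y) := by
        rw [sum_const, card_univ, nsmul_eq_mul, Nat.card_eq_fintype_card]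
    _ ≤ Nat.card H * ((Nat.card H : ℝ)⁻¹ ^ (1 / p) * (Nat.card H : ℝ)⁻¹ ^ (1 / p)) := by
        gcongr
        refine (hμ f g hf hg).trans (mul_le_mul ?_ ?_ (powerMean_nonneg hg) (by positivity))
        · exact powerMean_indicator_fixedPoints_le hp hA
        · exact powerMean_indicator_fixedPoints_le hp hB
    _ = (Nat.card H : ℝ) ^ (1 - 2 / p) := by
        rw [← Real.rpow_add (by positivity), Real.inv_rpow hH.le, Real.rpow_sub hH, Real.rpow_one,
          ← div_eq_mul_inv]
        ring_nf

end CosetGame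

/-! ### Biased bit strings and the Hadamard code -/

section BiasedWeight

variable {ι : Type*} [Fintype ι] {η : ℝ}

/-- The probability of the bit string `z` when its bits are independent and each equals `1` with
probability `η`. -/
noncomputable def biasedWeight (η : ℝ) (z : ι → Bool) : ℝ := ∏ i, if z i then η else 1 - η

lemma biasedWeight_nonneg (hη0 : 0 ≤ η) (hη1 : η ≤ 1) (z : ι → Bool) : 0 ≤ biasedWeight η z :=
  prod_nonneg fun i _ ↦ by split_ifs <;> linarith

lemma biasedWeight_sub (x y : ι → Bool) :
    biasedWeight η (y - x) = ∏ i, bitFlipKernel η (x i) (y i) := by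
  refine prod_congr rfl fun i _ ↦ ?_
  cases hx : x i <;> cases hy : y i <;> simp [bitFlipKernel, hx, hy, Bool.sub_eq_xor]

lemma biasedWeight_eq_pow_mul_pow (z : ι → Bool) :
    biasedWeight η z = η ^ #{i | z i} * (1 - η) ^ (Fintype.card ι - #{i | z i}) := by
  rw [biasedWeight, prod_ite, prod_const, prod_const, ← compl_filter, card_compl]

lemma isHypercontractive_biasedWeight_sub [DecidableEq ι] (hη0 : 0 ≤ η) (hη1 : η ≤ 1 / 2) :
    IsHypercontractive (2 * (1 - η)) fun x y : ι → Bool ↦ biasedWeight η (y - x) := by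
  simp only [biasedWeight_sub]
  exact (isHypercontractive_bitFlipKernel hη0 hη1).pi
    (bitFlipKernel_nonneg hη0 (by linarith)) (by linarith)

theorem khot_vishnoi_classical_upper_bound_general [DecidableEq ι] (hη0 : 0 ≤ η)
    (hη1 : η ≤ 1 / 2) (H : AddSubgroup (ι → Bool)) {A B : (ι → Bool) → ι → Bool}
    (hA : ∀ w, ∀ h ∈ H, A (w + h) = A w) (hAmem : ∀ w, A w - w ∈ H)
    (hB : ∀ w, ∀ h ∈ H, B (w + h) = B w) :
    𝔼 u, ∑ z, biasedWeight η z * (if A u + B (u + z) = z then (1 : ℝ) else 0)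
      ≤ 1 / (Nat.card H : ℝ) ^ (η / (1 - η)) := by
  have hexp : 1 - 2 / (2 * (1 - η)) = -(η / (1 - η)) := by
    have : 1 - η ≠ 0 := by linarith
    field_simp
    ring
  have hgame := coset_game_win_le (by linarith) (biasedWeight_nonneg hη0 (by linarith))
    (isHypercontractive_biasedWeight_sub hη0 hη1) hA hAmem hB
  rw [hexp, Real.rpow_neg (Nat.cast_nonneg _), ← one_div] at hgame
  -- on `Bool`, subtraction and addition are both XOR
  simp only [add_comm (A _)]
  exact hgame

end BiasedWeight

section Hadamard

variable {k : ℕ}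

lemma natCast_bool_eq_decide_mod_two (n : ℕ) : (n : Bool) = decide (n % 2 = 1) := by
  induction n with
  | zero => rfl
  | succ n ih =>
    rw [Nat.cast_succ, ih]
    rcases Nat.mod_two_eq_zero_or_one n with h | h <;> simp [Nat.add_mod, h] <;> rfl

lemma bdot_eq_dotProduct (a b : Fin k → Bool) : bdot a b = a ⬝ᵥ b := by
  have hmul (t : Fin k) : a t * b t = if a t && b t then 1 else 0 := by
    cases a t <;> cases b t <;> rfl
  simp only [bdot, dotProduct, hmul, sum_boole, natCast_bool_eq_decide_mod_two]

lemma biasedWeight_eq_pow_wt_mul_pow (η : ℝ) (z : (Fin k → Bool) → Bool) :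
    biasedWeight η z = η ^ wt z * (1 - η) ^ (2 ^ k - wt z) := by
  simp [biasedWeight_eq_pow_mul_pow, wt]

/-- The Hadamard code as an additive map over the field `Bool` with two elements, where addition
is XOR; its range is the subgroup `H` of codewords. -/
def hadamardHom (k : ℕ) : (Fin k → Bool) →+ ((Fin k → Bool) → Bool) where
  toFun := had
  map_zero' := funext fun j ↦ by simp [had, bdot_eq_dotProduct]
  map_add' s t := funext fun j ↦ by simp [had, bdot_eq_dotProduct, add_dotProduct]

lemma hadamardHom_injective : Function.Injective (hadamardHom k) := fun s t hst ↦
  dotProduct_eq s t fun j ↦ by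
    simpa [hadamardHom, had, bdot_eq_dotProduct] using congrFun hst j

lemma card_range_hadamardHom : Nat.card (hadamardHom k).range = 2 ^ k := by
  rw [← Nat.card_congr (AddMonoidHom.ofInjective hadamardHom_injective).toEquiv]
  simp

lemma apply_add_of_mem_range_hadamardHom {A : ((Fin k → Bool) → Bool) → (Fin k → Bool) → Bool}
    (hA : ∀ w s, A (sxor w (had s)) = A w) : ∀ w, ∀ h ∈ (hadamardHom k).range, A (w + h) = A w := by
  rintro w _ ⟨s, rfl⟩
  exact hA w s

end Hadamard

/-- For every power of two `n = 2^k` and `η ∈ [0,1/2]`, every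
deterministic classical strategy for the Khot–Vishnoi game — functions
`A, B : {0,1}^n → {0,1}^n` that are constant on cosets of the Hadamard subgroup `H`
and output an element of the input coset — wins with probability (over a uniform `u`
and an `η`-biased `z`) at most `1/n^{η/(1−η)}`. -/
theorem khot_vishnoi_classical_upper_bound
    (k : ℕ) (η : ℝ) (hη0 : 0 ≤ η) (hη1 : η ≤ 1 / 2)
    (A B : ((Fin k → Bool) → Bool) → ((Fin k → Bool) → Bool))
    (hAcoset : ∀ w s, A (sxor w (had s)) = A w)
    (hAmem : ∀ w, ∃ s, A w = sxor w (had s))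
    (hBcoset : ∀ w s, B (sxor w (had s)) = B w)
    (hBmem : ∀ w, ∃ s, B w = sxor w (had s)) :
    (∑ u : (Fin k → Bool) → Bool, ∑ z : (Fin k → Bool) → Bool,
        η ^ (wt z) * (1 - η) ^ (2 ^ k - wt z) *
          (if sxor (A u) (B (sxor u z)) = z then (1 : ℝ) else 0))
      / (2 : ℝ) ^ (2 ^ k)
    ≤ 1 / ((2 ^ k : ℝ) ^ (η / (1 - η))) := by
  have h := khot_vishnoi_classical_upper_bound_general hη0 hη1 (hadamardHom k).range
    (apply_add_of_mem_range_hadamardHom hAcoset)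
    (fun w ↦ (hAmem w).imp fun s hs ↦ (sub_eq_of_eq_add' hs).symm)
    (apply_add_of_mem_range_hadamardHom hBcoset)
  simp only [card_range_hadamardHom, Fintype.expect_eq_sum_div_card, Fintype.card_fun,
    Fintype.card_bool, Fintype.card_fin, biasedWeight_eq_pow_wt_mul_pow, Nat.cast_pow,
    Nat.cast_ofNat] at h
  exact h
end

section
/- Let n = 2^k be a power of 2, let H ⊆ {0,1}^n be the subgroup of Hadamard codewords, and for a ∈ {0,1}^n let v^a ∈ ℝ^n be the unit vector with coordinates v^a_i = (−1)^{a_i}/√n. Then: (a) for every coset x of H and every z ∈ {0,1}^n, Σ_{a ∈ x} Σ_{b ∈ x⊕z} ⟨v^a, v^b⟩²/n = 1 (so the numbers ⟨v^a,v^b⟩²/n form a probability distribution on x × (x⊕z)); (b) for every coset x of H and every z ∈ {0,1}^n, Σ_{a ∈ x} ⟨v^a, v^{a⊕z}⟩²/n = (1 − 2|z|/n)², where |z| is the Hamming weight of z; and (c) for every η ∈ [0,1/2], if z ∈ {0,1}^n is η-biased (each bit independently 1 with probability η), then E_z[(1 − 2|z|/n)²] ≥ (1 − 2η)². Consequently,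 the quantum strategy for the Khot–Vishnoi game KV(n,η) that measures the n-dimensional maximally entangled state in the coset bases {v^a : a ∈ x} and {v^b : b ∈ y} wins with probability at least (1 − 2η)². -/
open scoped Classical
open Finset

/-- The unit vector `v^a ∈ ℝ^n` (`n = 2^k`) with `v^a_i = (−1)^{a_i}/√n`. -/
noncomputable def kvVec {k : ℕ} (a : (Fin k → Bool) → Bool) : (Fin k → Bool) → ℝ :=
  fun i => (if a i then (-1 : ℝ) else 1) / Real.sqrt (2 ^ k)

/-- The Euclidean dot product on `ℝ^n`, coordinates indexed by `{0,1}^k`. -/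
def dotR {k : ℕ} (u v : (Fin k → Bool) → ℝ) : ℝ := ∑ t, u t * v t

/-!
For a fixed `u` the vectors `v^a`, `a ∈ u ⊕ H`, form an orthonormal basis of `ℝ^n`: multiplying the
coordinates by the signs of `u` reduces this to the orthogonality of the Walsh characters. Parseval
in Alice's basis then makes the outcome probabilities sum to `1`. Since `⟨v^a, v^b⟩` is the average
sign of `a ⊕ b`, every pair of outputs with `a ⊕ b = z` has `⟨v^a, v^b⟩ = 1 - 2|z|/n`. For biased
`z` this is the mean of `n` independent signs, each with mean `1 - 2η` and variance `4η(1 - η)`, so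
its second moment is exactly `(1 - 2η)² + 4η(1 - η)/n`.
-/

section Sign

variable {R : Type*} [CommRing R]

/-- The sign `(-1)^b` of a bit `b`, with values in `R`. -/
def bitSign (b : Bool) : R := if b then -1 else 1

lemma bitSign_xor (a b : Bool) : (bitSign (xor a b) : R) = bitSign a * bitSign b := by
  cases a <;> cases b <;> simp [bitSign]

lemma bitSign_mul_self (b : Bool) : (bitSign b * bitSign b : R) = 1 := by
  cases b <;> simp [bitSign]

lemma sum_bitSign {ι : Type*} [Fintype ι] (z : ι → Bool) :
    ∑ j, (bitSign (z j) : R) = Fintype.card ι - 2 * #{j | z j = true} := by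
  have sign_eq (b : Bool) : (bitSign b : R) = 1 - 2 * if b = true then 1 else 0 := by
    cases b <;> norm_num [bitSign]
  simp only [sign_eq, sum_sub_distrib, ← mul_sum, sum_boole, sum_const, card_univ, nsmul_one]

end Sign

section Walsh

variable {R : Type*} [CommRing R] {k : ℕ}

lemma bitSign_had (s j : Fin k → Bool) :
    (bitSign (had s j) : R) = ∏ t, bitSign (s t && j t) := by
  simp only [bitSign, had, bdot, prod_ite, prod_const, one_pow, mul_one, decide_eq_true_eq]
  rcases Nat.mod_two_eq_zero_or_one #{t | (s t && j t) = true} with h | h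
  · rw [if_neg (by omega), (Nat.even_iff.2 h).neg_one_pow]
  · rw [if_pos h, (Nat.odd_iff.2 h).neg_one_pow]

lemma sum_bitSign_had_mul_bitSign_had (i j : Fin k → Bool) :
    ∑ s, (bitSign (had s i) * bitSign (had s j) : R) = if i = j then 2 ^ k else 0 := by
  have factor : ∑ s, (bitSign (had s i) * bitSign (had s j) : R)
      = ∏ t, ∑ b, bitSign (b && i t) * bitSign (b && j t) := by
    simp only [bitSign_had, ← prod_mul_distrib, Fintype.prod_sum]
  rw [factor]
  split_ifs with hij
  · simp [hij, bitSign_mul_self]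
  · obtain ⟨t, ht⟩ := Function.ne_iff.1 hij
    refine prod_eq_zero (mem_univ t) ?_
    revert ht
    cases i t <;> cases j t <;> simp [bitSign]

theorem sum_sq_sum_bitSign_had_mul (f : (Fin k → Bool) → R) :
    ∑ s, (∑ j, bitSign (had s j) * f j) ^ 2 = 2 ^ k * ∑ j, f j ^ 2 := by
  calc ∑ s, (∑ j, bitSign (had s j) * f j) ^ 2
      = ∑ s, ∑ i, ∑ j, f i * f j * (bitSign (had s i) * bitSign (had s j)) := by
        refine sum_congr rfl fun s _ => ?_
        rw [sq, sum_mul_sum]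
        exact sum_congr rfl fun i _ => sum_congr rfl fun j _ => by ring
    _ = ∑ i, ∑ j, f i * f j * ∑ s, bitSign (had s i) * bitSign (had s j) := by
        rw [sum_comm]
        refine sum_congr rfl fun i _ => ?_
        rw [sum_comm]
        simp only [mul_sum]
    _ = 2 ^ k * ∑ j, f j ^ 2 := by
        simp only [sum_bitSign_had_mul_bitSign_had, mul_ite, mul_zero, sum_ite_eq, mem_univ,
          if_true, ← sum_mul, ← sq]
        exact mul_comm _ _

end Walsh

section Biased

variable {R : Type*} [CommRing R] {ι : Type*} [Fintype ι]

/-- The probability of the string `z` when each bit is independently `1` with probability `η`; a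
polynomial in `η`, defined over any commutative ring. -/
def biasedProb (η : R) (z : ι → Bool) : R := ∏ j, if z j then η else 1 - η

lemma biasedProb_eq_pow_mul_pow (η : R) (z : ι → Bool) :
    biasedProb η z
      = η ^ #{j | z j = true} * (1 - η) ^ (Fintype.card ι - #{j | z j = true}) := by
  classical
  rw [biasedProb, prod_ite, prod_const, prod_const, ← compl_filter, card_compl]

variable [DecidableEq ι]

lemma sum_biasedProb_mul_prod_bitSign (η : R) (S : Finset ι) :
    ∑ z : ι → Bool, biasedProb η z * ∏ j ∈ S, bitSign (z j) = (1 - 2 * η) ^ #S := by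
  calc ∑ z : ι → Bool, biasedProb η z * ∏ j ∈ S, bitSign (z j)
      = ∏ j, ∑ b : Bool, (if b then η else 1 - η) * if j ∈ S then bitSign b else 1 := by
        rw [Fintype.prod_sum]
        simp only [biasedProb, prod_mul_distrib, prod_ite_mem, univ_inter]
    _ = ∏ j, if j ∈ S then 1 - 2 * η else 1 := by
        refine prod_congr rfl fun j _ => ?_
        split_ifs
        · simp only [bitSign, Fintype.sum_bool, if_true, Bool.false_eq_true, if_false]
          ring
        · simp
    _ = (1 - 2 * η) ^ #S := by
        rw [prod_ite_mem, univ_inter, prod_const]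

lemma sum_biasedProb_mul_bitSign_mul_bitSign (η : R) (i j : ι) :
    ∑ z : ι → Bool, biasedProb η z * (bitSign (z i) * bitSign (z j))
      = (1 - 2 * η) ^ 2 + if i = j then 4 * η * (1 - η) else 0 := by
  split_ifs with hij
  · have total := sum_biasedProb_mul_prod_bitSign η (∅ : Finset ι)
    simp only [prod_empty, card_empty, pow_zero] at total
    simp only [hij, bitSign_mul_self, total]
    ring
  · simpa only [prod_pair hij, card_pair hij, add_zero]
      using sum_biasedProb_mul_prod_bitSign η {i, j}

theorem sum_biasedProb_mul_sq_sum_bitSign (η : R) :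
    ∑ z : ι → Bool, biasedProb η z * (∑ j, bitSign (z j)) ^ 2
      = Fintype.card ι ^ 2 * (1 - 2 * η) ^ 2 + Fintype.card ι * (4 * η * (1 - η)) := by
  calc ∑ z : ι → Bool, biasedProb η z * (∑ j, bitSign (z j)) ^ 2
      = ∑ i, ∑ j, ∑ z : ι → Bool, biasedProb η z * (bitSign (z i) * bitSign (z j)) := by
        simp only [sq, sum_mul_sum]
        simp only [mul_sum]
        rw [sum_comm]
        exact sum_congr rfl fun i _ => sum_comm
    _ = Fintype.card ι ^ 2 * (1 - 2 * η) ^ 2 + Fintype.card ι * (4 * η * (1 - η)) := by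
        simp only [sum_biasedProb_mul_bitSign_mul_bitSign, sum_add_distrib, sum_ite_eq, mem_univ,
          if_true, sum_const, card_univ, nsmul_eq_mul]
        ring

end Biased

section KhotVishnoi

variable {k : ℕ}

lemma sxor_sxor_cancel_left (a z : (Fin k → Bool) → Bool) : sxor a (sxor a z) = z :=
  funext fun j => by simp only [sxor, ← Bool.xor_assoc, Bool.xor_self, Bool.false_xor]

lemma sxor_right_comm (a b c : (Fin k → Bool) → Bool) :
    sxor (sxor a b) c = sxor (sxor a c) b :=
  funext fun j => Bool.xor_right_comm (a j) (b j) (c j)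

lemma kvVec_eq_bitSign_div (a : (Fin k → Bool) → Bool) (i : Fin k → Bool) :
    kvVec a i = bitSign (a i) / √(2 ^ k) :=
  rfl

lemma sum_bitSign_div_two_pow (z : (Fin k → Bool) → Bool) :
    (∑ j, bitSign (z j)) / (2 : ℝ) ^ k = 1 - 2 * (wt z : ℝ) / 2 ^ k := by
  rw [sum_bitSign, sub_div]
  simp [wt]

lemma dotR_kvVec_kvVec (a b : (Fin k → Bool) → Bool) :
    dotR (kvVec a) (kvVec b) = 1 - 2 * (wt (sxor a b) : ℝ) / 2 ^ k := by
  rw [← sum_bitSign_div_two_pow, sum_div, dotR]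
  refine sum_congr rfl fun j _ => ?_
  rw [kvVec_eq_bitSign_div, kvVec_eq_bitSign_div, div_mul_div_comm,
    Real.mul_self_sqrt (by positivity), sxor, bitSign_xor]

lemma dotR_kvVec_self (a : (Fin k → Bool) → Bool) : dotR (kvVec a) (kvVec a) = 1 := by
  simp [dotR_kvVec_kvVec, sxor, wt]

theorem sum_sq_dotR_kvVec_coset (u : (Fin k → Bool) → Bool) (w : (Fin k → Bool) → ℝ) :
    ∑ s, dotR (kvVec (sxor u (had s))) w ^ 2 = dotR w w := by
  have dot_eq (s : Fin k → Bool) : dotR (kvVec (sxor u (had s))) w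
      = ∑ j, bitSign (had s j) * (bitSign (u j) / √(2 ^ k) * w j) := by
    refine sum_congr rfl fun j _ => ?_
    rw [kvVec_eq_bitSign_div, sxor, bitSign_xor]
    ring
  have sq_eq (j : Fin k → Bool) :
      (bitSign (u j) / √(2 ^ k) * w j) ^ 2 = w j * w j / 2 ^ k := by
    rw [mul_pow, div_pow, sq (bitSign _), bitSign_mul_self, Real.sq_sqrt (by positivity)]
    ring
  simp only [dot_eq, sum_sq_sum_bitSign_had_mul, sq_eq, ← sum_div]
  rw [mul_div_cancel₀ _ (by positivity), dotR]

theorem sum_sum_sq_dotR_kvVec_coset (u v : (Fin k → Bool) → Bool) :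
    ∑ s, ∑ t, dotR (kvVec (sxor u (had s))) (kvVec (sxor v (had t))) ^ 2 / (2 : ℝ) ^ k = 1 := by
  rw [sum_comm]
  simp [← sum_div, sum_sq_dotR_kvVec_coset, dotR_kvVec_self]

theorem sum_sq_dotR_kvVec_sxor (a : (Fin k → Bool) → (Fin k → Bool) → Bool)
    (z : (Fin k → Bool) → Bool) :
    ∑ s, dotR (kvVec (a s)) (kvVec (sxor (a s) z)) ^ 2 / (2 : ℝ) ^ k
      = (1 - 2 * (wt z : ℝ) / 2 ^ k) ^ 2 := by
  simp [dotR_kvVec_kvVec, sxor_sxor_cancel_left, mul_div_cancel₀]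

theorem sum_pow_wt_mul_sq_one_sub_wt (η : ℝ) :
    ∑ z : (Fin k → Bool) → Bool, η ^ wt z * (1 - η) ^ (2 ^ k - wt z)
        * (1 - 2 * (wt z : ℝ) / 2 ^ k) ^ 2
      = (1 - 2 * η) ^ 2 + 4 * η * (1 - η) / 2 ^ k := by
  have prob_eq (z : (Fin k → Bool) → Bool) :
      η ^ wt z * (1 - η) ^ (2 ^ k - wt z) = biasedProb η z := by
    simp [biasedProb_eq_pow_mul_pow, wt]
  simp only [prob_eq, ← sum_bitSign_div_two_pow, div_pow, ← mul_div_assoc, ← sum_div,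
    sum_biasedProb_mul_sq_sum_bitSign]
  simp only [Fintype.card_fun, Fintype.card_bool, Fintype.card_fin]
  push_cast
  field_simp

end KhotVishnoi

theorem khot_vishnoi_quantum_strategy_general (k : ℕ) :
    (∀ u v : (Fin k → Bool) → Bool,
        (∑ s, ∑ t, dotR (kvVec (sxor u (had s))) (kvVec (sxor v (had t))) ^ 2 / (2 : ℝ) ^ k) = 1) ∧
    (∀ u z : (Fin k → Bool) → Bool,
        (∑ s, dotR (kvVec (sxor u (had s))) (kvVec (sxor (sxor u (had s)) z)) ^ 2 / (2 : ℝ) ^ k)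
          = (1 - 2 * (wt z : ℝ) / (2 : ℝ) ^ k) ^ 2) ∧
    (∀ η : ℝ,
        ∑ z : (Fin k → Bool) → Bool,
            η ^ (wt z) * (1 - η) ^ (2 ^ k - wt z) * (1 - 2 * (wt z : ℝ) / (2 : ℝ) ^ k) ^ 2
          = (1 - 2 * η) ^ 2 + 4 * η * (1 - η) / 2 ^ k) ∧
    (∀ η : ℝ,
        (∑ u : (Fin k → Bool) → Bool, ∑ z : (Fin k → Bool) → Bool,
            η ^ (wt z) * (1 - η) ^ (2 ^ k - wt z) *
              (∑ s, dotR (kvVec (sxor u (had s))) (kvVec (sxor (sxor u z) (had s))) ^ 2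
                / (2 : ℝ) ^ k)) / (2 : ℝ) ^ (2 ^ k)
          = (1 - 2 * η) ^ 2 + 4 * η * (1 - η) / 2 ^ k) := by
  refine ⟨sum_sum_sq_dotR_kvVec_coset, fun u => sum_sq_dotR_kvVec_sxor fun s => sxor u (had s),
    sum_pow_wt_mul_sq_one_sub_wt, fun η => ?_⟩
  have win_eq (u z : (Fin k → Bool) → Bool) :
      ∑ s, dotR (kvVec (sxor u (had s))) (kvVec (sxor (sxor u z) (had s))) ^ 2 / (2 : ℝ) ^ k
        = (1 - 2 * (wt z : ℝ) / (2 : ℝ) ^ k) ^ 2 := by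
    simpa only [sxor_right_comm u z] using sum_sq_dotR_kvVec_sxor (fun s => sxor u (had s)) z
  simp only [win_eq, sum_pow_wt_mul_sq_one_sub_wt, sum_const, nsmul_eq_mul, card_univ,
    Fintype.card_fun, Fintype.card_bool, Fintype.card_fin]
  push_cast
  exact mul_div_cancel_left₀ _ (by positivity)

/-- With `n = 2^k`, `H` the Hadamard subgroup and `v^a` as above
(cosets `x = u⊕H` and `y = x⊕z` enumerated as `u⊕h_s` and `u⊕z⊕h_t`):
(a) the numbers `⟨v^a,v^b⟩²/n`, for `a ∈ x`, `b ∈ x⊕z`, sum to `1` (they form a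
probability distribution, namely the quantum strategy's output distribution);
(b) `Σ_{a∈x} ⟨v^a, v^{a⊕z}⟩²/n = (1 − 2|z|/n)²`;
(c) for `η ∈ [0,1/2]` and `η`-biased `z`, `E_z[(1 − 2|z|/n)²] ≥ (1 − 2η)²`;
and consequently (d) the quantum strategy measuring the `n`-dimensional maximally
entangled state in the coset bases wins the Khot–Vishnoi game with probability at
least `(1 − 2η)²`. -/
theorem khot_vishnoi_quantum_strategy (k : ℕ) :
    (∀ u z : (Fin k → Bool) → Bool,
        (∑ s : Fin k → Bool, ∑ t : Fin k → Bool,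
            dotR (kvVec (sxor u (had s))) (kvVec (sxor (sxor u z) (had t))) ^ 2
              / (2 : ℝ) ^ k) = 1) ∧
    (∀ u z : (Fin k → Bool) → Bool,
        (∑ s : Fin k → Bool,
            dotR (kvVec (sxor u (had s))) (kvVec (sxor (sxor u (had s)) z)) ^ 2
              / (2 : ℝ) ^ k)
          = (1 - 2 * (wt z : ℝ) / (2 : ℝ) ^ k) ^ 2) ∧
    (∀ η : ℝ, 0 ≤ η → η ≤ 1 / 2 →
        (1 - 2 * η) ^ 2 ≤
          ∑ z : (Fin k → Bool) → Bool,
            η ^ (wt z) * (1 - η) ^ (2 ^ k - wt z)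
              * (1 - 2 * (wt z : ℝ) / (2 : ℝ) ^ k) ^ 2) ∧
    (∀ η : ℝ, 0 ≤ η → η ≤ 1 / 2 →
        (1 - 2 * η) ^ 2 ≤
          (∑ u : (Fin k → Bool) → Bool, ∑ z : (Fin k → Bool) → Bool,
              η ^ (wt z) * (1 - η) ^ (2 ^ k - wt z) *
                (∑ s : Fin k → Bool,
                  dotR (kvVec (sxor u (had s))) (kvVec (sxor (sxor u z) (had s))) ^ 2
                    / (2 : ℝ) ^ k))
            / (2 : ℝ) ^ (2 ^ k)) := by
  obtain ⟨total, win, moment, value⟩ := khot_vishnoi_quantum_strategy_general k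
  have sq_le (η : ℝ) (h0 : 0 ≤ η) (h1 : η ≤ 1 / 2) :
      (1 - 2 * η) ^ 2 ≤ (1 - 2 * η) ^ 2 + 4 * η * (1 - η) / 2 ^ k :=
    le_add_of_nonneg_right (div_nonneg (mul_nonneg (by linarith) (by linarith)) (by positivity))
  exact ⟨fun u z => total u (sxor u z), win,
    fun η h0 h1 => (sq_le η h0 h1).trans_eq (moment η).symm,
    fun η h0 h1 => (sq_le η h0 h1).trans_eq (value η).symm⟩
end
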